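/- Tropical Voronoi regions are star convex with center their site: let S be a finite subset of ℝ^d, let s ∈ S, and let x ∈ ℝ^d satisfy d_tr(x, s) ≤ d_tr(x, s') for all s' ∈ S. Then for every t ∈ [0, 1], the point y = s + t·(x − s) on the classical segment from s to x also satisfies d_tr(y, s) ≤ d_tr(y, s') for all s' ∈ S. -/

import Mathlib

/-!
A point `y` of the segment `[s, x]` lies metrically between `s` and `x`: since `dtr` is induced by
a seminorm, `dtr x y + dtr y s = dtr x s`. Hence, for any other site `s'`, the triangle inequality
gives `dtr x y + dtr y s = dtr x s ≤ dtr x s' ≤ dtr x y + dtr y s'`, and cancelling `dtr x y`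
yields `dtr y s ≤ dtr y s'`.

The triangle inequality and the homogeneity are both read off from the characterisation of `dtr` as
the largest difference between two coordinates of `x - y`.
-/

/-- The tropical metric on `ℝ^d`:
`d_tr(x, y) = max_i (x_i - y_i) - min_i (x_i - y_i)`. -/
noncomputable def dtr {d : ℕ} [NeZero d] (x y : Fin d → ℝ) : ℝ :=
  (Finset.univ.sup' Finset.univ_nonempty fun i => x i - y i) -
  (Finset.univ.inf' Finset.univ_nonempty fun i => x i - y i)

lemma dtr_le_iff {d : ℕ} [NeZero d] {x y : Fin d → ℝ} {r : ℝ} :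
    dtr x y ≤ r ↔ ∀ i j, (x i - y i) - (x j - y j) ≤ r := by
  unfold dtr
  constructor
  · intro h i j
    have h1 := Finset.le_sup' (fun i => x i - y i) (Finset.mem_univ i)
    have h2 := Finset.inf'_le (fun i => x i - y i) (Finset.mem_univ j)
    linarith
  · intro h
    obtain ⟨i, -, hi⟩ := Finset.exists_mem_eq_sup' Finset.univ_nonempty (fun i => x i - y i)
    obtain ⟨j, -, hj⟩ := Finset.exists_mem_eq_inf' Finset.univ_nonempty (fun i => x i - y i)
    rw [hi, hj]
    exact h i j

lemma dtr_triangle {d : ℕ} [NeZero d] (x y z : Fin d → ℝ) : dtr x z ≤ dtr x y + dtr y z := by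
  rw [dtr_le_iff]
  intro i j
  have h1 := dtr_le_iff.1 (le_refl (dtr x y)) i j
  have h2 := dtr_le_iff.1 (le_refl (dtr y z)) i j
  linarith

/-- One inequality of the positive homogeneity of the seminorm inducing `dtr`. -/
lemma dtr_le_mul {d : ℕ} [NeZero d] {x y u v : Fin d → ℝ} {c : ℝ} (hc : 0 ≤ c)
    (h : x - y = c • (u - v)) : dtr x y ≤ c * dtr u v := by
  rw [dtr_le_iff]
  intro i j
  have hi := congrFun h i
  have hj := congrFun h j
  simp only [Pi.sub_apply, Pi.smul_apply, smul_eq_mul] at hi hj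
  rw [hi, hj, ← mul_sub]
  exact mul_le_mul_of_nonneg_left (dtr_le_iff.1 le_rfl i j) hc

/-- Tropical Voronoi regions are star convex with center their site: if x is in
the Voronoi region of s ∈ S, then so is each point of the segment [s, x]. -/
theorem tropical_voronoi_star_convex (d : ℕ) [NeZero d]
    (S : Finset (Fin d → ℝ)) (s : Fin d → ℝ) (hs : s ∈ S)
    (x : Fin d → ℝ) (hx : ∀ s' ∈ S, dtr x s ≤ dtr x s')
    (t : ℝ) (ht0 : 0 ≤ t) (ht1 : t ≤ 1) :
    ∀ s' ∈ S, dtr (s + t • (x - s)) s ≤ dtr (s + t • (x - s)) s' := by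
  intro s' hs'
  have h1 : dtr (s + t • (x - s)) s ≤ t * dtr x s := dtr_le_mul ht0 (by module)
  have h2 : dtr x (s + t • (x - s)) ≤ (1 - t) * dtr x s :=
    dtr_le_mul (sub_nonneg.2 ht1) (by module)
  have h3 := dtr_triangle x (s + t • (x - s)) s'
  have h4 := hx s' hs'
  linarith
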